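/- Let X be a compact metric space, φ : ℝ × X → X a continuous flow, and f ∈ C(X, ℝ); assume the topological pressure P(g) is finite for every g ∈ C(X, ℝ). Fix ε > 0 and let (t_n)_{n≥0} be times with t_n ≥ n and (E_n)_{n≥0} finite nonempty (t_n, ε)-separated subsets of X such that liminf_{n→∞} (1/t_n) log Σ_{x∈E_n} exp(∫₀^{t_n} f(φ^s x) ds) ≥ P(f). Let β_n be the atomic probability measure on X with β_n({x}) = exp(∫₀^{t_n} f(φ^s x) ds) / Σ_{y∈E_n} exp(∫₀^{t_n} f(φ^s y) ds) for x ∈ E_n, and let ν_n := β_n ∘ δ_{t_n}^{-1} be the induced probability measure on 𝒫(X). Then for every closed subset K of 𝒫(X) one has limsup_{n→∞} (1/t_n) log ν_n(K) ≤ − inf { J_f(m) : m ∈ K }. -/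

import Mathlib

open MeasureTheory Filter Topology ENNReal NNReal

/-- `E` is a `(t, ε)`-separated set for the flow `φ`: distinct points of `E` are moved at
distance `> ε` apart at some time `s ∈ [0, t]`. -/
def IsSeparatedSet {X : Type*} [MetricSpace X] (φ : ℝ → C(X, X)) (t ε : ℝ) (E : Set X) : Prop :=
  ∀ x ∈ E, ∀ y ∈ E, x ≠ y → ∃ s ∈ Set.Icc (0 : ℝ) t, ε < dist (φ s x) (φ s y)

/-- The topological pressure of a continuous function `f` for the flow `φ`, with values in
`[-∞, ∞]`. -/
noncomputable def pressure {X : Type*} [MetricSpace X] (φ : ℝ → C(X, X)) (f : C(X, ℝ)) : EReal :=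
  ⨆ (ε : ℝ) (_ : 0 < ε),
    Filter.limsup (fun t : ℝ =>
      ((1 / t : ℝ) : EReal) *
        ENNReal.log (⨆ (E : Finset X) (_ : IsSeparatedSet φ t ε (E : Set X)),
          ENNReal.ofReal (∑ x ∈ E, Real.exp (∫ s in (0 : ℝ)..t, f (φ s x))))) Filter.atTop

/-- The rate functional `J_f(μ) = sup_ω (∫ ω dμ - Q_f(ω))` where
`Q_f(ω) = P(f + ω) - P(f)`. -/
noncomputable def Jfun {X : Type*} [MetricSpace X] [MeasurableSpace X]
    (φ : ℝ → C(X, X)) (f : C(X, ℝ)) (μ : ProbabilityMeasure X) : EReal :=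
  ⨆ ω : C(X, ℝ), (((∫ x, ω x ∂(μ : Measure X)) : ℝ) : EReal) -
    (pressure φ (f + ω) - pressure φ f)

/-- The empirical measure `δ_t(x)` of the flow `φ`: the normalized occupation measure of
the orbit segment `{φ^s x : s ∈ (0, t]}`, so that
`∫ ω dδ_t(x) = (1/t) ∫₀ᵗ ω(φ^s x) ds`. -/
noncomputable def empDist {X : Type*} [MetricSpace X] [MeasurableSpace X]
    (φ : ℝ → C(X, X)) (t : ℝ) (x : X) : Measure X :=
  (ENNReal.ofReal t)⁻¹ • Measure.map (fun s => φ s x) (volume.restrict (Set.Ioc 0 t))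

lemma ldub_le_of_exp {t c : ℝ} (ht : 0 < t) {y : ℝ≥0∞} (h : y ≤ ENNReal.ofReal (Real.exp (t * c))) :
    ((1 / t : ℝ) : EReal) * ENNReal.log y ≤ (c : EReal) := by
  have h1 : ENNReal.log y ≤ ((t * c : ℝ) : EReal) := by
    refine (ENNReal.log_monotone h).trans ?_
    rw [ENNReal.log_ofReal_of_pos (Real.exp_pos _), Real.log_exp]
  have h2 : (0 : EReal) ≤ ((1 / t : ℝ) : EReal) := by
    exact_mod_cast (by positivity : (0 : ℝ) ≤ 1 / t)
  refine (mul_le_mul_of_nonneg_left h1 h2).trans ?_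
  rw [← EReal.coe_mul]
  apply le_of_eq
  congr 1
  field_simp

/-- Partition functions along the sequence are eventually bounded by the pressure. -/
lemma ldub_Z_le {X : Type*} [MetricSpace X] (φ : ℝ → C(X, X)) (g : C(X, ℝ)) (p : ℝ)
    (hp : pressure φ g = (p : EReal)) (ε : ℝ) (hε : 0 < ε)
    (t : ℕ → ℝ) (ht0 : ∀ n, 0 < t n) (htn : ∀ n : ℕ, (n : ℝ) ≤ t n)
    (E : ℕ → Finset X) (hEne : ∀ n, (E n).Nonempty)
    (hEsep : ∀ n, IsSeparatedSet φ (t n) ε (E n : Set X)) (η : ℝ) (hη : 0 < η) :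
    ∀ᶠ n in atTop, ∑ x ∈ E n, Real.exp (∫ s in (0 : ℝ)..t n, g (φ s x))
      ≤ Real.exp (t n * (p + η)) := by
  have hle : Filter.limsup (fun t : ℝ =>
      ((1 / t : ℝ) : EReal) *
        ENNReal.log (⨆ (E : Finset X) (_ : IsSeparatedSet φ t ε (E : Set X)),
          ENNReal.ofReal (∑ x ∈ E, Real.exp (∫ s in (0 : ℝ)..t, g (φ s x))))) Filter.atTop
      < ((p + η : ℝ) : EReal) := by
    refine lt_of_le_of_lt (b := (p : EReal)) ?_ (by exact_mod_cast (by linarith : p < p + η))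
    rw [← hp]
    unfold pressure
    exact le_iSup₂_of_le ε hε le_rfl
  have ht : Tendsto t atTop atTop := tendsto_atTop_mono htn tendsto_natCast_atTop_atTop
  filter_upwards [ht.eventually (eventually_lt_of_limsup_lt hle)] with n hn
  have hpos : 0 < ∑ x ∈ E n, Real.exp (∫ s in (0 : ℝ)..t n, g (φ s x)) :=
    Finset.sum_pos (fun _ _ => Real.exp_pos _) (hEne n)
  have h2 : (0 : EReal) ≤ ((1 / t n : ℝ) : EReal) := by
    have := ht0 n
    exact_mod_cast (by positivity : (0 : ℝ) ≤ 1 / t n)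
  have h3 : ((1 / t n : ℝ) : EReal) * ENNReal.log (ENNReal.ofReal
      (∑ x ∈ E n, Real.exp (∫ s in (0 : ℝ)..t n, g (φ s x)))) < ((p + η : ℝ) : EReal) := by
    refine lt_of_le_of_lt (mul_le_mul_of_nonneg_left (ENNReal.log_monotone ?_) h2) hn
    exact le_iSup₂_of_le (E n) (hEsep n) le_rfl
  rw [ENNReal.log_ofReal_of_pos hpos, ← EReal.coe_mul, EReal.coe_lt_coe_iff] at h3
  rw [← Real.log_le_iff_le_exp hpos]
  rw [one_div, inv_mul_lt_iff₀ (ht0 n)] at h3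
  exact h3.le

lemma ldub_integral {X : Type*} [MetricSpace X] [CompactSpace X] [MeasurableSpace X] [BorelSpace X]
    (φ : ℝ → C(X, X)) (hφcont : Continuous fun p : ℝ × X => φ p.1 p.2)
    (t : ℝ) (ht : 0 < t) (x : X) (ω : C(X, ℝ)) :
    t * ∫ y, ω y ∂(empDist φ t x) = ∫ s in (0 : ℝ)..t, ω (φ s x) := by
  have hc : Continuous fun s => φ s x := hφcont.comp (by fun_prop : Continuous fun s : ℝ => (s, x))
  unfold empDist
  rw [integral_smul_measure, integral_map hc.measurable.aemeasurable
    ω.continuous.aestronglyMeasurable, intervalIntegral.integral_of_le ht.le]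
  rw [ENNReal.toReal_inv, ENNReal.toReal_ofReal ht.le, smul_eq_mul]
  field_simp

lemma ldub_open {X : Type*} [MetricSpace X] [CompactSpace X] [MeasurableSpace X] [BorelSpace X]
    (ω : C(X, ℝ)) (c : ℝ) :
    IsOpen {μ : ProbabilityMeasure X | c < ∫ x, ω x ∂(μ : Measure X)} := by
  have : Continuous fun μ : ProbabilityMeasure X => ∫ x, ω x ∂(μ : Measure X) := by
    rw [continuous_iff_continuousAt]
    intro μ
    exact (ProbabilityMeasure.tendsto_iff_forall_integral_tendsto.1 tendsto_id)
      (BoundedContinuousFunction.mkOfCompact ω)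
  exact isOpen_lt continuous_const this

/-- Let `φ` be a continuous flow on a compact metric space `X` whose
topological pressure is finite on all of `C(X,ℝ)`, and let `f ∈ C(X,ℝ)` and `ε > 0`. Let
`t_n ≥ n` be positive times and `E_n` nonempty finite `(t_n, ε)`-separated sets with
`liminf (1/t_n) log Σ_{x∈E_n} exp ∫₀^{t_n} f(φ^s x) ds ≥ P(f)`. Let `β_n` be the atomic
probability measure on `X` giving mass proportional to `exp ∫₀^{t_n} f(φ^s x) ds` to each
`x ∈ E_n`, and let `ν_n := β_n ∘ δ_{t_n}^{-1}` be the law of the empirical measure.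
Then for every closed `K ⊆ 𝒫(X)`:
`limsup (1/t_n) log ν_n(K) ≤ - inf {J_f(m) : m ∈ K}`. -/
theorem large_deviations_upper_bound
    {X : Type*} [MetricSpace X] [CompactSpace X] [MeasurableSpace X] [BorelSpace X]
    [MeasurableSpace (ProbabilityMeasure X)] [BorelSpace (ProbabilityMeasure X)]
    (φ : ℝ → C(X, X))
    (hφcont : Continuous fun p : ℝ × X => φ p.1 p.2)
    (hφ0 : φ 0 = ContinuousMap.id X)
    (hφadd : ∀ s t : ℝ, φ (s + t) = (φ s).comp (φ t))
    (f : C(X, ℝ))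
    (hfin : ∀ g : C(X, ℝ), ∃ r : ℝ, pressure φ g = (r : EReal))
    (ε : ℝ) (hε : 0 < ε)
    (t : ℕ → ℝ) (ht0 : ∀ n, 0 < t n) (htn : ∀ n : ℕ, (n : ℝ) ≤ t n)
    (E : ℕ → Finset X) (hEne : ∀ n, (E n).Nonempty)
    (hEsep : ∀ n, IsSeparatedSet φ (t n) ε (E n : Set X))
    (hliminf : pressure φ f ≤
      Filter.liminf (fun n : ℕ =>
        ((1 / t n : ℝ) : EReal) *
          ((Real.log (∑ x ∈ E n, Real.exp (∫ s in (0 : ℝ)..t n, f (φ s x))) : ℝ) : EReal))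
        Filter.atTop)
    (δPM : ℕ → X → ProbabilityMeasure X)
    (hδPM : ∀ n x, (δPM n x : Measure X) = empDist φ (t n) x)
    (hδmeas : ∀ n, Measurable (δPM n))
    (β : ℕ → Measure X)
    (hβ : ∀ n, β n =
      (ENNReal.ofReal (∑ x ∈ E n, Real.exp (∫ s in (0 : ℝ)..t n, f (φ s x))))⁻¹ •
        ∑ x ∈ E n, ENNReal.ofReal (Real.exp (∫ s in (0 : ℝ)..t n, f (φ s x))) •
          Measure.dirac x)
    (K : Set (ProbabilityMeasure X)) (hK : IsClosed K) :
    Filter.limsup (fun n : ℕ =>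
        ((1 / t n : ℝ) : EReal) * ENNReal.log (((β n).map (δPM n)) K)) Filter.atTop
      ≤ -⨅ m ∈ K, Jfun φ f m := by
  have htt : Tendsto t atTop atTop := tendsto_atTop_mono htn tendsto_natCast_atTop_atTop
  -- reduction to real levels
  suffices H : ∀ a : ℝ, (a : EReal) < (⨅ m ∈ K, Jfun φ f m) → ∀ η : ℝ, 0 < η →
      Filter.limsup (fun n : ℕ =>
        ((1 / t n : ℝ) : EReal) * ENNReal.log (((β n).map (δPM n)) K)) Filter.atTop
      ≤ ((-a + 3 * η : ℝ) : EReal) by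
    rw [EReal.le_neg]
    refine EReal.ge_of_forall_gt_iff_ge.1 ?_
    intro a ha
    rw [EReal.le_neg, ← EReal.coe_neg]
    refine EReal.le_of_forall_lt_iff_le.1 ?_
    intro z hz
    have hz' : -a < z := by exact_mod_cast hz
    refine (H a ha ((z + a) / 3) (by linarith)).trans (le_of_eq ?_)
    congr 1
    ring
  intro a ha η hη
  choose P hP using hfin
  -- choice of test functions
  have hω : ∀ m ∈ K, ∃ ω : C(X, ℝ), a + (P (f + ω) - P f) < ∫ x, ω x ∂(m : Measure X) := by
    intro m hm
    have h1 : (a : EReal) < Jfun φ f m := lt_of_lt_of_le ha (iInf₂_le m hm)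
    unfold Jfun at h1
    obtain ⟨ω, hω⟩ := lt_iSup_iff.1 h1
    refine ⟨ω, ?_⟩
    rw [hP, hP, ← EReal.coe_sub, ← EReal.coe_sub, EReal.coe_lt_coe_iff] at hω
    linarith
  have hKc : IsCompact K := hK.isCompact
  obtain ⟨S, hS⟩ := hKc.elim_finite_subcover
    (fun ω : C(X, ℝ) => {μ : ProbabilityMeasure X |
      a + (P (f + ω) - P f) < ∫ x, ω x ∂(μ : Measure X)})
    (fun ω => ldub_open ω _) (fun m hm => by
      obtain ⟨ω, h⟩ := hω m hm
      exact Set.mem_iUnion.2 ⟨ω, h⟩)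
  -- eventual bounds
  have hup : ∀ᶠ n in atTop, ∀ ω ∈ S,
      ∑ x ∈ E n, Real.exp (∫ s in (0 : ℝ)..t n, (f + ω) (φ s x))
        ≤ Real.exp (t n * (P (f + ω) + η)) :=
    (Filter.eventually_all_finset S).2 fun ω _ =>
      ldub_Z_le φ (f + ω) _ (hP _) ε hε t ht0 htn E hEne hEsep η hη
  have hlow : ∀ᶠ n in atTop, Real.exp (t n * (P f - η)) ≤
      ∑ x ∈ E n, Real.exp (∫ s in (0 : ℝ)..t n, f (φ s x)) := by
    have h1 : ((P f - η : ℝ) : EReal) < Filter.liminf (fun n : ℕ =>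
        ((1 / t n : ℝ) : EReal) *
          ((Real.log (∑ x ∈ E n, Real.exp (∫ s in (0 : ℝ)..t n, f (φ s x))) : ℝ) : EReal))
        Filter.atTop := by
      refine lt_of_lt_of_le ?_ hliminf
      rw [hP]
      exact_mod_cast (by linarith : P f - η < P f)
    filter_upwards [eventually_lt_of_lt_liminf h1] with n hn
    have hpos : 0 < ∑ x ∈ E n, Real.exp (∫ s in (0 : ℝ)..t n, f (φ s x)) :=
      Finset.sum_pos (fun _ _ => Real.exp_pos _) (hEne n)
    rw [← EReal.coe_mul, EReal.coe_lt_coe_iff, one_div, lt_inv_mul_iff₀ (ht0 n)] at hn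
    rw [← Real.le_log_iff_exp_le hpos]
    exact hn.le
  have hcard : ∀ᶠ n in atTop, (S.card : ℝ) ≤ Real.exp (t n * η) := by
    have : Tendsto (fun n => Real.exp (t n * η)) atTop atTop :=
      Real.tendsto_exp_atTop.comp (htt.atTop_mul_const hη)
    exact this.eventually_ge_atTop _
  refine Filter.limsup_le_of_le (by isBoundedDefault) ?_
  filter_upwards [hup, hlow, hcard] with n h1 h2 h3
  refine ldub_le_of_exp (ht0 n) ?_
  set Z := ∑ x ∈ E n, Real.exp (∫ s in (0 : ℝ)..t n, f (φ s x)) with hZ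
  have hZpos : 0 < Z := Finset.sum_pos (fun _ _ => Real.exp_pos _) (hEne n)
  have hKm : MeasurableSet (δPM n ⁻¹' K) := hδmeas n hK.measurableSet
  -- pointwise Chebyshev bound
  have hpt : ∀ x, ENNReal.ofReal (Real.exp (∫ s in (0 : ℝ)..t n, f (φ s x))) *
      Measure.dirac x (δPM n ⁻¹' K) ≤ ENNReal.ofReal (∑ ω ∈ S,
        Real.exp (∫ s in (0 : ℝ)..t n, (f + ω) (φ s x)) *
          Real.exp (- (t n * (a + (P (f + ω) - P f))))) := by
    intro x
    rw [Measure.dirac_apply' _ hKm]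
    by_cases hx : x ∈ δPM n ⁻¹' K
    · rw [Set.indicator_of_mem hx, Pi.one_apply, mul_one]
      apply ENNReal.ofReal_le_ofReal
      obtain ⟨ω, hωS, hωx⟩ := Set.mem_iUnion₂.1 (hS hx)
      refine le_trans ?_ (Finset.single_le_sum (f := fun ω : C(X, ℝ) =>
        Real.exp (∫ s in (0 : ℝ)..t n, (f + ω) (φ s x)) *
          Real.exp (- (t n * (a + (P (f + ω) - P f))))) (fun _ _ => by positivity) hωS)
      have hωx' : a + (P (f + ω) - P f) < ∫ y, ω y ∂(empDist φ (t n) x) := by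
        rw [← hδPM]; exact hωx
      have h5 := ldub_integral φ hφcont (t n) (ht0 n) x ω
      have hc : Continuous fun s => φ s x :=
        hφcont.comp (by fun_prop : Continuous fun s : ℝ => (s, x))
      have h6 : ∫ s in (0 : ℝ)..t n, (f + ω) (φ s x) =
          (∫ s in (0 : ℝ)..t n, f (φ s x)) + ∫ s in (0 : ℝ)..t n, ω (φ s x) :=
        intervalIntegral.integral_add
          ((f.continuous.comp hc).intervalIntegrable _ _)
          ((ω.continuous.comp hc).intervalIntegrable _ _)
      rw [← Real.exp_add]
      apply Real.exp_le_exp.2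
      rw [h6, ← h5]
      have := mul_lt_mul_of_pos_left hωx' (ht0 n)
      linarith
    · rw [Set.indicator_of_notMem hx, mul_zero]
      exact zero_le
  have hreal : Z⁻¹ * ∑ x ∈ E n, ∑ ω ∈ S,
        Real.exp (∫ s in (0 : ℝ)..t n, (f + ω) (φ s x)) *
          Real.exp (- (t n * (a + (P (f + ω) - P f)))) ≤ Real.exp (t n * (-a + 3 * η)) := by
    rw [inv_mul_le_iff₀ hZpos, Finset.sum_comm]
    calc _ ≤ ∑ ω ∈ S, Real.exp (t n * (P f + η - a)) := by
          refine Finset.sum_le_sum fun ω hωS => ?_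
          rw [← Finset.sum_mul]
          refine (mul_le_mul_of_nonneg_right (h1 ω hωS) (Real.exp_pos _).le).trans ?_
          rw [← Real.exp_add]
          apply le_of_eq
          congr 1
          ring
      _ = S.card * Real.exp (t n * (P f + η - a)) := by simp
      _ ≤ Real.exp (t n * η) * Real.exp (t n * (P f + η - a)) := by gcongr
      _ = Real.exp (t n * (P f - η)) * Real.exp (t n * (-a + 3 * η)) := by
          rw [← Real.exp_add, ← Real.exp_add]
          congr 1
          ring
      _ ≤ Z * Real.exp (t n * (-a + 3 * η)) := by gcongr
  rw [Measure.map_apply (hδmeas n) hK.measurableSet, hβ n, ← hZ, Measure.smul_apply,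
    Measure.finsetSum_apply, smul_eq_mul]
  simp only [Measure.smul_apply, smul_eq_mul]
  refine (mul_le_mul_right (Finset.sum_le_sum fun x _ => hpt x) _).trans ?_
  rw [← ENNReal.ofReal_sum_of_nonneg (fun _ _ => Finset.sum_nonneg fun _ _ => by positivity),
    ← ENNReal.ofReal_inv_of_pos hZpos, ← ENNReal.ofReal_mul (by positivity)]
  exact ENNReal.ofReal_le_ofReal hreal
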